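/- For the weighted directed cycle digraph, suppose w i > 0 for every i ≠ 0 and w 0 ∈ ℝ satisfies 1 + w 0 · Σ_{i ≠ 0} (1 / w i) ≠ 0. Then the (n−1)×(n−1) reduced matrix Eτᵀ * W * Rᵀ is invertible, and the (0,0) entry of the n×n matrix Rᵀ * (Eτᵀ * W * Rᵀ)⁻¹ * Eτᵀ equals (Σ_{i ≠ 0} 1 / w i) / (1 + w 0 · Σ_{i ≠ 0} 1 / w i). (This is the value |M(0)| of the transfer function of the uncertain cyclic-pursuit loop at the phase-crossover frequency ω = 0.) -/

import Mathlib

/-!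
The columns of `E` add up to zero, so the omitted column is `E_c = -E_τ 1` and, `E_τ` having full
column rank, `T_τ = -1`. Hence the image of `Rᵀ = [I  -1]ᵀ` consists of the vectors `z` with
`∑ i, z i = 0`, while the kernel of `E_τᵀ` consists of the constants. Applying
`Rᵀ (E_τᵀ W Rᵀ)⁻¹ E_τᵀ` to the basis vector `e_a` therefore means finding `z` with `∑ i, z i = 0`
such that all entries of `W z - e_a` equal some `c`: `z i = c / w i` for `i ≠ a`, `z a = -c σ`, and
the entry at `a` gives `c = -1 / (1 + w a σ)`.
-/

open Matrix

/-- The incidence matrix of the directed cycle on `Fin n`, whose edge `i` runs from `i` to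
`i + 1`; the loop (`n = 1`) gets incidence `0`. -/
def cycleIncidence (K : Type*) [Ring K] (n : ℕ) [NeZero n] : Matrix (Fin n) (Fin n) K :=
  1 - (1 : Matrix (Fin n) (Fin n) K).submatrix id (· + 1)

/-- The incidence matrix `E_τ` of the in-branching of the cycle on `Fin (m + 1)` that omits the
edge from `m` to `0`. -/
def branchingIncidence (K : Type*) [Ring K] (m : ℕ) : Matrix (Fin (m + 1)) (Fin m) K :=
  (cycleIncidence K (m + 1)).submatrix id Fin.castSucc

/-- The matrix `[I  -1]`, whose rows are the fundamental cuts of the cycle on `Fin (m + 1)` with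
respect to that in-branching. -/
def fundamentalCutMatrix (K : Type*) [Ring K] (m : ℕ) : Matrix (Fin m) (Fin (m + 1)) K :=
  of fun i => Fin.snoc (α := fun _ => K) (Pi.single i 1) (-1)

/-- The reduced weighted matrix `E_τᵀ W Rᵀ` for the edge weights `w`. -/
def reducedMatrix {K : Type*} [Ring K] {m : ℕ} (w : Fin (m + 1) → K) : Matrix (Fin m) (Fin m) K :=
  (branchingIncidence K m)ᵀ * diagonal w * (fundamentalCutMatrix K m)ᵀ

section CommRing

variable {K : Type*} [CommRing K] {m : ℕ}

lemma cycleIncidence_add_two_apply (v i : Fin (m + 2)) :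
    cycleIncidence K (m + 2) v i = if v = i then 1 else if v = i + 1 then -1 else 0 := by
  obtain rfl | hvi := eq_or_ne v i
  · simp [cycleIncidence, one_apply]
  · simp only [cycleIncidence, Matrix.sub_apply, submatrix_apply, id_eq, one_apply, if_neg hvi]
    split_ifs <;> simp

lemma cycleIncidence_mulVec_one (n : ℕ) [NeZero n] : cycleIncidence K n *ᵥ 1 = 0 := by
  ext v
  have hshift : ∑ i : Fin n, (1 : Matrix (Fin n) (Fin n) K) v (i + 1) =
      ∑ i, (1 : Matrix (Fin n) (Fin n) K) v i :=
    Equiv.sum_comp (Equiv.addRight 1) ((1 : Matrix (Fin n) (Fin n) K) v)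
  simp only [cycleIncidence, mulVec, dotProduct, Pi.one_apply, mul_one, Matrix.sub_apply,
    submatrix_apply, Finset.sum_sub_distrib, Pi.zero_apply]
  exact sub_eq_zero.2 hshift.symm

lemma branchingIncidence_mulVec_one :
    branchingIncidence K m *ᵥ 1 = -(cycleIncidence K (m + 1)).col (Fin.last m) := by
  ext v
  have hrow := congrFun (cycleIncidence_mulVec_one (K := K) (m + 1)) v
  simp only [mulVec, dotProduct, Fin.sum_univ_castSucc, Pi.one_apply, mul_one,
    Pi.zero_apply] at hrow
  simpa [branchingIncidence, mulVec, dotProduct] using eq_neg_of_add_eq_zero_left hrow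

lemma branchingIncidence_transpose_mulVec (x : Fin (m + 1) → K) (i : Fin m) :
    ((branchingIncidence K m)ᵀ *ᵥ x) i = x i.castSucc - x i.succ := by
  simp [branchingIncidence, cycleIncidence, mulVec, dotProduct, one_apply, sub_mul]

lemma branchingIncidence_transpose_mulVec_eq_zero_iff {x : Fin (m + 1) → K} :
    (branchingIncidence K m)ᵀ *ᵥ x = 0 ↔ ∀ v, x v = x 0 := by
  simp only [funext_iff, branchingIncidence_transpose_mulVec, Pi.zero_apply, sub_eq_zero]
  refine ⟨fun hx v => ?_, fun hx i => (hx _).trans (hx _).symm⟩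
  induction v using Fin.induction with
  | zero => rfl
  | succ i ih => exact (hx i).symm.trans ih

lemma sum_branchingIncidence_mulVec (y : Fin m → K) :
    ∑ v, (branchingIncidence K m *ᵥ y) v = 0 := by
  have hconst : (branchingIncidence K m)ᵀ *ᵥ 1 = 0 :=
    branchingIncidence_transpose_mulVec_eq_zero_iff.2 fun _ => rfl
  rw [← one_dotProduct, dotProduct_mulVec, ← mulVec_transpose, hconst, zero_dotProduct]

lemma branchingIncidence_mulVec_eq_zero_iff {y : Fin m → K} :
    branchingIncidence K m *ᵥ y = 0 ↔ y = 0 := by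
  refine ⟨fun hy => funext fun j => ?_, fun hy => by rw [hy, mulVec_zero]⟩
  -- `j` is the only branching edge that leaves the initial segment `{0, …, j}`.
  have hcut : (branchingIncidence K m)ᵀ *ᵥ (fun v => if v ≤ j.castSucc then 1 else 0) =
      Pi.single j 1 := by
    ext i
    simp only [branchingIncidence_transpose_mulVec, Pi.single_apply, Fin.le_def, Fin.ext_iff,
      Fin.val_castSucc, Fin.val_succ]
    split_ifs <;> first | omega | simp
  rw [← single_one_dotProduct j y, ← hcut, mulVec_transpose, ← dotProduct_mulVec, hy,
    dotProduct_zero, Pi.zero_apply]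

lemma fundamentalCutMatrix_transpose_mulVec (y : Fin m → K) :
    (fundamentalCutMatrix K m)ᵀ *ᵥ y = Fin.snoc (α := fun _ => K) y (-∑ i, y i) := by
  ext v
  induction v using Fin.lastCases <;>
    simp [fundamentalCutMatrix, mulVec, dotProduct, Pi.single_apply]

lemma sum_fundamentalCutMatrix_transpose_mulVec (y : Fin m → K) :
    ∑ v, ((fundamentalCutMatrix K m)ᵀ *ᵥ y) v = 0 := by
  simp [fundamentalCutMatrix_transpose_mulVec, Fin.sum_univ_castSucc]

lemma fundamentalCutMatrix_transpose_mulVec_eq_zero_iff {y : Fin m → K} :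
    (fundamentalCutMatrix K m)ᵀ *ᵥ y = 0 ↔ y = 0 := by
  refine ⟨fun hy => funext fun i => ?_, fun hy => by rw [hy, mulVec_zero]⟩
  simpa [fundamentalCutMatrix_transpose_mulVec] using congrFun hy i.castSucc

end CommRing

section Field

variable {K : Type*} [Field K] {m : ℕ}

lemma isUnit_of_forall_mulVec_eq_zero {ι : Type*} [Fintype ι] [DecidableEq ι]
    {M : Matrix ι ι K} (hM : ∀ y, M *ᵥ y = 0 → y = 0) : IsUnit M :=
  mulVec_injective_iff_isUnit.1 <| (injective_iff_map_eq_zero M.mulVecLin).2 hM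

lemma isUnit_branchingIncidence_transpose_mul_self (hm : ((m + 1 : ℕ) : K) ≠ 0) :
    IsUnit ((branchingIncidence K m)ᵀ * branchingIncidence K m) := by
  -- A vector `E_τ y` in the kernel of `E_τᵀ` is constant and has entries summing to zero.
  refine isUnit_of_forall_mulVec_eq_zero fun y hy =>
    branchingIncidence_mulVec_eq_zero_iff.1 ?_
  rw [← mulVec_mulVec] at hy
  have hconst := branchingIncidence_transpose_mulVec_eq_zero_iff.1 hy
  have hzero : (branchingIncidence K m *ᵥ y) 0 = 0 := by
    have hsum := sum_branchingIncidence_mulVec y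
    simp only [hconst, Finset.sum_const, Finset.card_univ, Fintype.card_fin, nsmul_eq_mul] at hsum
    exact (mul_eq_zero.1 hsum).resolve_left hm
  ext v
  rw [hconst, hzero, Pi.zero_apply]

lemma branchingIncidence_leftInverse_mulVec_col_last (hm : ((m + 1 : ℕ) : K) ≠ 0) :
    (((branchingIncidence K m)ᵀ * branchingIncidence K m)⁻¹ * (branchingIncidence K m)ᵀ) *ᵥ
      (cycleIncidence K (m + 1)).col (Fin.last m) = -1 := by
  have hdet := (isUnit_iff_isUnit_det _).1 (isUnit_branchingIncidence_transpose_mul_self hm)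
  rw [← neg_neg ((cycleIncidence K (m + 1)).col _), ← branchingIncidence_mulVec_one, mulVec_neg,
    mulVec_mulVec, Matrix.mul_assoc, nonsing_inv_mul _ hdet, one_mulVec]

lemma apply_mul_one_add_mul_sum_one_div {ι : Type*} [Fintype ι] [DecidableEq ι]
    {w z : ι → K} {a : ι} {c t : K} (hw : ∀ i, i ≠ a → w i ≠ 0) (hsum : ∑ i, z i = 0)
    (hz : ∀ i, w i * z i - Pi.single (M := fun _ => K) a t i = c) :
    z a * (1 + w a * ∑ i with i ≠ a, 1 / w i) = t * ∑ i with i ≠ a, 1 / w i := by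
  have hne (i : ι) (hi : i ≠ a) : z i = c * (1 / w i) := by
    rw [← hz i, Pi.single_eq_of_ne hi, sub_zero]
    field_simp [hw i hi]
  have hza : z a + c * ∑ i with i ≠ a, 1 / w i = 0 := by
    rw [← hsum, ← Finset.add_sum_erase _ z (Finset.mem_univ a), Finset.mul_sum,
      Finset.filter_ne']
    exact congrArg _ <| Finset.sum_congr rfl fun i hi => (hne i (Finset.ne_of_mem_erase hi)).symm
  have hwa : w a * z a - t = c := by simpa using hz a
  linear_combination hza + (∑ i with i ≠ a, 1 / w i) * hwa

variable {w : Fin (m + 1) → K} {a : Fin (m + 1)}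

lemma exists_mul_sub_single_eq_const {y : Fin m → K} {t : K}
    (hy : reducedMatrix w *ᵥ y = (branchingIncidence K m)ᵀ *ᵥ Pi.single a t) :
    ∃ c, ∀ i,
      w i * ((fundamentalCutMatrix K m)ᵀ *ᵥ y) i - Pi.single (M := fun _ => K) a t i = c := by
  rw [reducedMatrix, ← mulVec_mulVec, ← mulVec_mulVec, ← sub_eq_zero, ← mulVec_sub,
    branchingIncidence_transpose_mulVec_eq_zero_iff] at hy
  exact ⟨_, by simpa only [Pi.sub_apply, mulVec_diagonal] using hy⟩

variable (hw : ∀ i, i ≠ a → w i ≠ 0) (ha : 1 + w a * ∑ i with i ≠ a, 1 / w i ≠ 0)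
include hw ha

lemma isUnit_reducedMatrix : IsUnit (reducedMatrix w) := by
  refine isUnit_of_forall_mulVec_eq_zero fun y hy =>
    fundamentalCutMatrix_transpose_mulVec_eq_zero_iff.1 ?_
  have hy' : reducedMatrix w *ᵥ y = (branchingIncidence K m)ᵀ *ᵥ Pi.single a 0 := by
    rw [hy, Pi.single_zero, mulVec_zero]
  obtain ⟨c, hc⟩ := exists_mul_sub_single_eq_const hy'
  have hza : ((fundamentalCutMatrix K m)ᵀ *ᵥ y) a = 0 := by
    have hmul :=
      apply_mul_one_add_mul_sum_one_div hw (sum_fundamentalCutMatrix_transpose_mulVec y) hc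
    rw [zero_mul] at hmul
    exact (mul_eq_zero.1 hmul).resolve_right ha
  have hc0 : c = 0 := by simpa [hza] using (hc a).symm
  ext i
  obtain rfl | hi := eq_or_ne i a
  · exact hza
  · simpa [hc0, hw i hi] using hc i

lemma cutMatrix_mul_reducedMatrix_inv_mul_incidence_apply_self :
    ((fundamentalCutMatrix K m)ᵀ * (reducedMatrix w)⁻¹ * (branchingIncidence K m)ᵀ) a a =
      (∑ i with i ≠ a, 1 / w i) / (1 + w a * ∑ i with i ≠ a, 1 / w i) := by
  have hdet := (isUnit_iff_isUnit_det _).1 (isUnit_reducedMatrix hw ha)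
  set y := (reducedMatrix w)⁻¹ *ᵥ (branchingIncidence K m)ᵀ *ᵥ Pi.single a 1 with hy
  have hy_eq : reducedMatrix w *ᵥ y = (branchingIncidence K m)ᵀ *ᵥ Pi.single a 1 := by
    rw [hy, mulVec_mulVec, mul_nonsing_inv _ hdet, one_mulVec]
  obtain ⟨c, hc⟩ := exists_mul_sub_single_eq_const hy_eq
  have hentry :
      ((fundamentalCutMatrix K m)ᵀ * (reducedMatrix w)⁻¹ * (branchingIncidence K m)ᵀ) a a =
        ((fundamentalCutMatrix K m)ᵀ *ᵥ y) a := by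
    rw [hy, mulVec_mulVec, mulVec_mulVec, mulVec_single_one, col_apply]
  rw [hentry, eq_div_iff ha,
    apply_mul_one_add_mul_sum_one_div hw (sum_fundamentalCutMatrix_transpose_mulVec y) hc, one_mul]

end Field

theorem cycle_transfer_function_value_at_zero_general {K : Type*} [Field K]
    (n : ℕ) (hn : 2 ≤ n) (hnK : (n : K) ≠ 0) (w : Fin n → K) (a : Fin n)
    (hw : ∀ i : Fin n, i ≠ a → w i ≠ 0)
    (σ : K) (hσ : σ = ∑ i ∈ Finset.univ.filter (fun i : Fin n => i ≠ a), 1 / w i)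
    (ha : 1 + w a * σ ≠ 0)
    (E : Matrix (Fin n) (Fin n) K)
    (hE : ∀ v i, E v i = if v = i then 1 else if v = i + ⟨1, hn⟩ then -1 else 0)
    (W : Matrix (Fin n) (Fin n) K) (hW : W = Matrix.diagonal w)
    (Eτ : Matrix (Fin n) (Fin (n - 1)) K)
    (hEτ : Eτ = E.submatrix id
      (fun i : Fin (n - 1) => ⟨i.val, lt_of_lt_of_le i.2 (Nat.sub_le n 1)⟩))
    (Ec : Matrix (Fin n) (Fin 1) K)
    (hEc : Ec = E.submatrix id (fun _ => ⟨n - 1, Nat.sub_one_lt_of_lt hn⟩))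
    (Tτ : Matrix (Fin (n - 1)) (Fin 1) K)
    (hTτ : Tτ = (Eτᵀ * Eτ)⁻¹ * Eτᵀ * Ec)
    (R : Matrix (Fin (n - 1)) (Fin n) K)
    (hR : ∀ (i : Fin (n - 1)) (j : Fin n), R i j =
      if h : j.val < n - 1 then (if i.val = j.val then 1 else 0) else Tτ i 0) :
    IsUnit (Eτᵀ * W * Rᵀ) ∧ (Rᵀ * (Eτᵀ * W * Rᵀ)⁻¹ * Eτᵀ) a a = σ / (1 + w a * σ) := by
  obtain ⟨k, rfl⟩ : ∃ k, n = k + 2 := ⟨n - 2, by omega⟩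
  obtain rfl : E = cycleIncidence K (k + 2) := by
    ext v i
    exact (hE v i).trans (cycleIncidence_add_two_apply v i).symm
  obtain rfl : Eτ = branchingIncidence K (k + 1) := hEτ
  have hT (i : Fin (k + 1)) : Tτ i 0 = -1 := by
    rw [hTτ, hEc]
    exact congrFun (branchingIncidence_leftInverse_mulVec_col_last hnK) i
  obtain rfl : R = fundamentalCutMatrix K (k + 1) := by
    ext i j
    rw [hR]
    induction j using Fin.lastCases with
    | last => simp [fundamentalCutMatrix, hT]
    | cast j => simp [fundamentalCutMatrix, Pi.single_apply, Fin.ext_iff, eq_comm, j.is_lt]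
  subst hW hσ
  exact ⟨isUnit_reducedMatrix hw ha,
    cutMatrix_mul_reducedMatrix_inv_mul_incidence_apply_self hw ha⟩

/-- For the weighted directed cycle digraph with `w i > 0` for `i ≠ 0` and
`1 + w 0 · Σ_{i ≠ 0} 1/(w i) ≠ 0`, the reduced matrix `Eτᵀ * W * Rᵀ` is invertible and
the `(0,0)` entry of `Rᵀ * (Eτᵀ * W * Rᵀ)⁻¹ * Eτᵀ` equals
`(Σ_{i ≠ 0} 1/(w i)) / (1 + w 0 · Σ_{i ≠ 0} 1/(w i))`. -/
theorem cycle_transfer_function_value_at_zero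
    (n : ℕ) (hn : 2 ≤ n) (w : Fin n → ℝ)
    (hw : ∀ i : Fin n, i ≠ ⟨0, by omega⟩ → 0 < w i)
    (σ : ℝ) (hσ : σ = ∑ i ∈ Finset.univ.filter (fun i : Fin n => i ≠ ⟨0, by omega⟩), 1 / w i)
    (h0 : 1 + w ⟨0, by omega⟩ * σ ≠ 0)
    (E : Matrix (Fin n) (Fin n) ℝ)
    (hE : ∀ v i, E v i = if v = i then 1 else if v = i + ⟨1, by omega⟩ then -1 else 0)
    (A : Matrix (Fin n) (Fin n) ℝ) (hA : A = 1)
    (W : Matrix (Fin n) (Fin n) ℝ) (hW : W = Matrix.diagonal w)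
    (Eτ : Matrix (Fin n) (Fin (n - 1)) ℝ)
    (hEτ : Eτ = E.submatrix id
      (fun i : Fin (n - 1) => ⟨i.val, lt_of_lt_of_le i.2 (Nat.sub_le n 1)⟩))
    (Ec : Matrix (Fin n) (Fin 1) ℝ)
    (hEc : Ec = E.submatrix id (fun _ => ⟨n - 1, by omega⟩))
    (Tτ : Matrix (Fin (n - 1)) (Fin 1) ℝ)
    (hTτ : Tτ = (Eτᵀ * Eτ)⁻¹ * Eτᵀ * Ec)
    (R : Matrix (Fin (n - 1)) (Fin n) ℝ)
    (hR : ∀ (i : Fin (n - 1)) (j : Fin n), R i j =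
      if h : j.val < n - 1 then (if i.val = j.val then 1 else 0) else Tτ i 0) :
    IsUnit (Eτᵀ * W * Rᵀ) ∧
    (Rᵀ * (Eτᵀ * W * Rᵀ)⁻¹ * Eτᵀ) ⟨0, by omega⟩ ⟨0, by omega⟩ =
      σ / (1 + w ⟨0, by omega⟩ * σ) := by
  exact cycle_transfer_function_value_at_zero_general n hn (Nat.cast_ne_zero.2 (by omega)) w _
    (fun i hi => (hw i hi).ne') σ hσ h0 E hE W hW Eτ hEτ Ec hEc Tτ hTτ R hR
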